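/- For every fixed integer t ≥ 1 there exist a constant c > 0 and a natural number d₀ (depending only on t) such that for every integer d ≥ d₀ the following holds: for every set Q of d+5 points in general position in ℝ^d that is in convex position and forms the vertex set of a d-dimensional convex polytope conv(Q) which is t-neighborly but not (t+1)-neighborly, there exist at least c · d² distinct unordered partitions of Q into two disjoint sets B and C with B ∪ C = Q and min{|B|, |C|} ≥ ⌈(d+3−t)/2⌉, such that the relative interiors of the convex hulls of B and of C have a common point. -/

import Mathlib

/-!
Let `D` be the space of affine dependencies of `Q`. Since `Q` consists of `d + 5` points in general
position, `D` has dimension four and the evaluations at any four points of `Q` form a basis of its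
dual (`FourUniform`, `fourUniform_depSpace`). The positive and negative parts of a nowhere-zero
element of `D` form a crossing partition of `Q` (`dep_crossing`), so it suffices to count the sign
patterns of such elements, that is, the cells of the hyperplane arrangement `{v i = 0}` in `D`,
whose two parts are large enough.

Because `conv Q` is not `(t+1)`-neighborly, some `S` with at most `t + 1` elements is not a face, and
a separation argument gives a nonzero dependency that is nonnegative off `S`
(`exists_dep_of_not_isFaceOf`). Perturbing it gives `ν ∈ D` that is positive on `β = Q \ S`. If the
signs of `l ∈ D` on `β` sum to at most one in absolute value, all its signs sum to at most `t + 2`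
in absolute value, which is the required bound on the sizes of the parts. It remains to find
quadratically many cells balanced on `β` in this sense (`FourUniform.card_balanced`).

For each pair `p ≠ q` in `β`, a discrete intermediate value argument in the plane of dependencies
vanishing at `p` and `q` gives a vertex `u ∈ D` that is balanced on `β` and whose zeros are exactly
`p`, `q` and a third point of `β` (`FourUniform.exists_halving_vertex`). Choose generic functionals
`X`, `Y` with `X ν = Y ν = 0`, and normalise `Y u = 1`. On `D`, the functional `X - X u • Y` is a
combination of the evaluations at the three zeros of `u`, with nonzero coefficients; evaluating at
`ν`, which is positive there, shows that the three coefficients do not all have the same sign.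
Hence one of the two cells at `u` whose signs at the zeros are those of the coefficients, or
their opposites, is again balanced (`FourUniform.exists_cell`). On that cell, `u` is the unique
minimiser, or maximiser, of `X / Y`, so the cell together with this direction determines the zeros
of `u` (`IsCellVertex.eq`). Thus a cell arises from boundedly many pairs, and the number of balanced
cells is quadratic in the size of `β`.
-/

noncomputable section

attribute [local instance] Classical.propDecidable

/-- Points of `ℝ^d`. -/
abbrev Pt (d : ℕ) := EuclideanSpace ℝ (Fin d)

/-- A finite point set is in general position in `ℝ^d` if every subset of at most
`d + 1` of its points is affinely independent. -/
def GenPos (d : ℕ) (V : Finset (Pt d)) : Prop :=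
  ∀ S : Finset (Pt d), S ⊆ V → S.card ≤ d + 1 →
    AffineIndependent ℝ ((↑) : {x // x ∈ (S : Set (Pt d))} → Pt d)

/-- Two vertex-disjoint point sets form a crossing pair of simplices if the
relative (intrinsic) interiors of their convex hulls have a common point. -/
def CrossingPair (d : ℕ) (B C : Finset (Pt d)) : Prop :=
  Disjoint B C ∧
    (intrinsicInterior ℝ (convexHull ℝ (B : Set (Pt d))) ∩
      intrinsicInterior ℝ (convexHull ℝ (C : Set (Pt d)))).Nonempty

/-- The set of unordered pairs `{B, C}` of disjoint `d`-element subsets of `V`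
whose simplices cross: the crossing pairs of hyperedges. -/
def crossingHyperedgePairs (d : ℕ) (V : Finset (Pt d)) : Set (Sym2 (Finset (Pt d))) :=
  {p | ∃ B C : Finset (Pt d), p = s(B, C) ∧ B ⊆ V ∧ C ⊆ V ∧
        B.card = d ∧ C.card = d ∧ CrossingPair d B C}


/-- A finite point set is in convex position if no point of it lies in the convex
hull of the remaining points. -/
def ConvexPos (d : ℕ) (V : Finset (Pt d)) : Prop :=
  ∀ v ∈ V, v ∉ convexHull ℝ ((V : Set (Pt d)) \ {v})

/-- `S` is a face of the polytope `conv V`: some linear functional attains the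
value `a` on all of `S` and values `< a` on the rest of `V`. -/
def IsFaceOf (d : ℕ) (S V : Finset (Pt d)) : Prop :=
  S ⊆ V ∧ ∃ (f : Pt d →ₗ[ℝ] ℝ) (a : ℝ),
    (∀ x ∈ S, f x = a) ∧ ∀ y ∈ V, y ∉ S → f y < a

/-- The polytope `conv V` is `t`-neighborly: every subset of `V` with at most `t`
elements is a face of `conv V`. -/
def Neighborly (d t : ℕ) (V : Finset (Pt d)) : Prop :=
  ∀ S : Finset (Pt d), S ⊆ V → S.card ≤ t → IsFaceOf d S V

/-- The unordered partitions of `P` into two disjoint parts `B`, `C`, each of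
size at least `k`, whose simplices cross (the relative interiors of their convex
hulls meet). -/
def crossingPartitions (d : ℕ) (P : Finset (Pt d)) (k : ℕ) : Set (Sym2 (Finset (Pt d))) :=
  {p | ∃ B C : Finset (Pt d), p = s(B, C) ∧ B ∪ C = P ∧ Disjoint B C ∧
        k ≤ B.card ∧ k ≤ C.card ∧
        (intrinsicInterior ℝ (convexHull ℝ (B : Set (Pt d))) ∩
          intrinsicInterior ℝ (convexHull ℝ (C : Set (Pt d)))).Nonempty}


section Abstract

variable {ι : Type*} [Fintype ι] [DecidableEq ι]

/-! ### Uniform four-dimensional spaces of functions -/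

/-- A space of real functions on `ι` on which the evaluations at any four points form a basis of
the dual space; stated as interpolation on at most four points, together with the fact that an
element vanishing on four points is zero. When `ι` has at least four elements this says that
`D` is four-dimensional and represents the uniform matroid of rank four on `ι`. -/
structure FourUniform (D : Submodule ℝ (ι → ℝ)) : Prop where
  exists_eq : ∀ T : Finset ι, T.card ≤ 4 → ∀ g : ι → ℝ, ∃ v ∈ D, ∀ i ∈ T, v i = g i
  eq_zero : ∀ v ∈ D, ∀ T : Finset ι, 4 ≤ T.card → (∀ i ∈ T, v i = 0) → v = 0

omit [DecidableEq ι] in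
/-- A nonzero `u ∈ D` can be moved slightly inside `D` so that the signs at its zeros are
prescribed by `σ` and the other signs do not change. Interpolation applies because `u` has at most
three zeros. -/
theorem FourUniform.perturb {D : Submodule ℝ (ι → ℝ)} (h : FourUniform D) {u : ι → ℝ}
    (hu : u ∈ D) (hu0 : u ≠ 0) (σ : ι → ℝ) :
    ∃ l ∈ D, ∃ δ : ℝ, 0 < δ ∧ (∀ i, u i = 0 → l i = δ * σ i) ∧
      ∀ i, u i ≠ 0 → 0 < u i * l i := by
  obtain ⟨w, hw, hwσ⟩ := h.exists_eq (Finset.univ.filter fun i => u i = 0) (by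
    by_contra hc
    exact hu0 (h.eq_zero u hu (Finset.univ.filter fun i => u i = 0) (by omega) (by simp))) σ
  have hev : ∀ᶠ δ : ℝ in nhdsWithin 0 (Set.Ioi 0), ∀ i, u i ≠ 0 → 0 < u i * (u i + δ * w i) := by
    rw [Filter.eventually_all]
    intro i
    by_cases hi : u i = 0
    · simp [hi]
    · have hc : Continuous fun δ : ℝ => u i * (u i + δ * w i) := by fun_prop
      have h0 : (0 : ℝ) < u i * (u i + 0 * w i) := by
        have := mul_self_pos.2 hi
        simpa using this
      filter_upwards [nhdsWithin_le_nhds (continuousAt_const.eventually_lt hc.continuousAt h0)]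
        with δ hδ _
      exact hδ
  obtain ⟨δ, hδ, hδ0⟩ := (hev.and self_mem_nhdsWithin).exists
  refine ⟨u + δ • w, D.add_mem hu (D.smul_mem _ hw), δ, hδ0, fun i hi => ?_, fun i hi => ?_⟩
  · simp [hi, hwσ i (by simp [hi])]
  · simpa using hδ i hi

omit [Fintype ι] in
/-- Discrete intermediate value argument: as the threshold `s i` moves from the largest slope to
the smallest one, the signed count `∑ j, ± sign (b j)`, with the sign determined by comparing `s j`
with the threshold, moves from a nonpositive to a nonnegative value; where it changes sign, the
count without the index `i` itself is at most one in absolute value. -/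
theorem exists_halving_slope_aux (F : Finset ι) (hF : F.Nonempty) (b s : ι → ℝ)
    (hs : Set.InjOn s F)
    (hT : 0 ≤ ∑ j ∈ F, (SignType.sign (b j) : ℤ)) :
    ∃ i ∈ F, |∑ j ∈ F, (SignType.sign (b j * (s j - s i)) : ℤ)| ≤ 1 := by
  -- `G i` counts the index `i` below the threshold, the sum in `hpre` counts it above.
  set G : ι → ℤ := fun i => ∑ j ∈ F, (SignType.sign (b j) : ℤ) * (if s i < s j then 1 else -1)
    with hG
  obtain ⟨m, hm, hmax⟩ := F.exists_max_image s hF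
  have hmP : m ∈ F.filter fun i => G i ≤ 0 := by
    refine Finset.mem_filter.2 ⟨hm, ?_⟩
    have : G m = - ∑ j ∈ F, (SignType.sign (b j) : ℤ) := by
      rw [hG, ← Finset.sum_neg_distrib]
      exact Finset.sum_congr rfl fun j hj => by simp [not_lt.2 (hmax j hj)]
    omega
  obtain ⟨i, hi, hmin⟩ := (F.filter fun i => G i ≤ 0).exists_min_image s ⟨m, hmP⟩
  obtain ⟨hiF, hGi⟩ := Finset.mem_filter.1 hi
  refine ⟨i, hiF, ?_⟩
  have hpre : 0 ≤ ∑ j ∈ F, (SignType.sign (b j) : ℤ) * (if s i ≤ s j then 1 else -1) := by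
    by_cases hne : (F.filter fun j => s j < s i).Nonempty
    · obtain ⟨k, hk, hkmax⟩ := (F.filter fun j => s j < s i).exists_max_image s hne
      obtain ⟨hkF, hki⟩ := Finset.mem_filter.1 hk
      have hGk : 0 < G k := by
        by_contra hc
        exact absurd (hmin k (Finset.mem_filter.2 ⟨hkF, not_lt.1 hc⟩)) (not_le.2 hki)
      have : G k = ∑ j ∈ F, (SignType.sign (b j) : ℤ) * (if s i ≤ s j then 1 else -1) := by
        refine Finset.sum_congr rfl fun j hj => ?_
        have : s k < s j ↔ s i ≤ s j := by
          refine ⟨fun h => ?_, fun h => hki.trans_le h⟩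
          by_contra hc
          exact absurd (hkmax j (Finset.mem_filter.2 ⟨hj, not_le.1 hc⟩)) (not_le.2 h)
        simp [this]
      omega
    · rw [Finset.not_nonempty_iff_eq_empty, Finset.filter_eq_empty_iff] at hne
      refine hT.trans_eq (Finset.sum_congr rfl fun j hj => ?_)
      simp [not_lt.1 (hne hj)]
  have hsgn : ∀ j, (SignType.sign (b j * (s j - s i)) : ℤ) =
      (SignType.sign (b j) : ℤ) * SignType.sign (s j - s i) := by
    intro j; rw [sign_mul]; simp
  have e1 : ∑ j ∈ F, (SignType.sign (b j) : ℤ) * (if s i ≤ s j then 1 else -1) =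
      ∑ j ∈ F, (SignType.sign (b j * (s j - s i)) : ℤ) + SignType.sign (b i) := by
    rw [← Finset.add_sum_erase _ _ hiF, ← Finset.add_sum_erase _ (fun j =>
      (SignType.sign (b j * (s j - s i)) : ℤ)) hiF]
    have : ∑ j ∈ F.erase i, (SignType.sign (b j) : ℤ) * (if s i ≤ s j then 1 else -1) =
      ∑ j ∈ F.erase i, (SignType.sign (b j * (s j - s i)) : ℤ) := by
      refine Finset.sum_congr rfl fun j hj => ?_
      obtain ⟨hji, hj⟩ := Finset.mem_erase.1 hj
      rw [hsgn]
      rcases lt_or_gt_of_ne (fun h => hji (hs hj hiF h)) with h | h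
      · simp [not_le.2 h, sign_neg (sub_neg.2 h)]
      · simp [h.le, sign_pos (sub_pos.2 h)]
    rw [this]; simp; ring
  have e2 : G i = ∑ j ∈ F, (SignType.sign (b j * (s j - s i)) : ℤ) - SignType.sign (b i) := by
    rw [hG]; dsimp only
    rw [← Finset.add_sum_erase _ _ hiF, ← Finset.add_sum_erase _ (fun j =>
      (SignType.sign (b j * (s j - s i)) : ℤ)) hiF]
    have : ∑ j ∈ F.erase i, (SignType.sign (b j) : ℤ) * (if s i < s j then 1 else -1) =
      ∑ j ∈ F.erase i, (SignType.sign (b j * (s j - s i)) : ℤ) := by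
      refine Finset.sum_congr rfl fun j hj => ?_
      obtain ⟨hji, hj⟩ := Finset.mem_erase.1 hj
      rw [hsgn]
      rcases lt_or_gt_of_ne (fun h => hji (hs hj hiF h)) with h | h
      · simp [not_lt.2 h.le, sign_neg (sub_neg.2 h)]
      · simp [h, sign_pos (sub_pos.2 h)]
    rw [this]; simp; ring
  have hε : |(SignType.sign (b i) : ℤ)| ≤ 1 := by
    cases SignType.sign (b i) <;> simp
  rw [abs_le] at hε ⊢
  omega

omit [Fintype ι] in
theorem exists_halving_slope (F : Finset ι) (hF : F.Nonempty) (b s : ι → ℝ)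
    (hs : Set.InjOn s F) :
    ∃ i ∈ F, |∑ j ∈ F, (SignType.sign (b j * (s j - s i)) : ℤ)| ≤ 1 := by
  rcases le_total 0 (∑ j ∈ F, (SignType.sign (b j) : ℤ)) with hT | hT
  · exact exists_halving_slope_aux F hF b s hs hT
  · obtain ⟨i, hi, h⟩ := exists_halving_slope_aux F hF (-b) s hs (by
      simpa [Left.sign_neg] using hT)
    refine ⟨i, hi, ?_⟩
    simpa [Left.sign_neg, neg_mul, Finset.sum_neg_distrib, abs_neg] using h

/-- For every pair `p ≠ q` there is `u ∈ D` that vanishes exactly at `p`, `q` and a third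
point `r ∈ β`, with the positive and negative values of `u` on `β` balanced up to one. The space of
`v ∈ D` with `v p = v q = 0` is spanned by two functions `a`, `b`, and the elements `a - c • b` with
a third zero correspond to the slopes `c = a r / b r`. -/
theorem FourUniform.exists_halving_vertex {D : Submodule ℝ (ι → ℝ)} (h : FourUniform D)
    (hι : 4 ≤ Fintype.card ι) (β : Finset ι) (hβ : 3 ≤ β.card) {p q : ι} (hpq : p ≠ q) :
    ∃ r ∈ β, r ≠ p ∧ r ≠ q ∧ ∃ u ∈ D, (∀ i, u i = 0 ↔ i ∈ ({p, q, r} : Finset ι)) ∧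
      |∑ j ∈ β, (SignType.sign (u j) : ℤ)| ≤ 1 := by
  have hF : ((β.erase p).erase q).Nonempty := by
    rw [← Finset.card_pos]
    have h1 := Finset.pred_card_le_card_erase (s := β) (a := p)
    have h2 := Finset.pred_card_le_card_erase (s := β.erase p) (a := q)
    omega
  obtain ⟨x, hx⟩ : ∃ x, x ∉ ({p, q} : Finset ι) := by
    by_contra! hc
    have := Finset.card_le_card (fun i _ => hc i : Finset.univ ⊆ ({p, q} : Finset ι))
    have h2 := Finset.card_le_two (a := p) (b := q)
    rw [Finset.card_univ] at this
    omega
  obtain ⟨y, hy⟩ : ∃ y, y ∉ ({p, q, x} : Finset ι) := by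
    by_contra! hc
    have := Finset.card_le_card (fun i _ => hc i : Finset.univ ⊆ ({p, q, x} : Finset ι))
    have h2 := Finset.card_le_three (a := p) (b := q) (c := x)
    rw [Finset.card_univ] at this
    omega
  simp only [Finset.mem_insert, Finset.mem_singleton, not_or] at hx hy
  obtain ⟨a, haD, ha⟩ := h.exists_eq {p, q, x, y} Finset.card_le_four (Pi.single y 1)
  have hap : a p = 0 := by rw [ha p (by simp)]; simp [Ne.symm hy.1]
  have haq : a q = 0 := by rw [ha q (by simp)]; simp [Ne.symm hy.2.1]
  have hax : a x = 0 := by rw [ha x (by simp)]; simp [Ne.symm hy.2.2]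
  have hay : a y = 1 := by rw [ha y (by simp)]; simp
  obtain ⟨b, hbD, hb⟩ : ∃ b ∈ D, ∀ i, b i = 0 ↔ i ∈ ({p, q} : Finset ι) := by
    obtain ⟨l, hl, δ, hδ, h1, h2⟩ := h.perturb haD (fun h0 => by simp [h0] at hay)
      (fun i => if i ∈ ({p, q} : Finset ι) then 0 else 1)
    refine ⟨l, hl, fun i => ⟨fun hi => ?_, fun hi => ?_⟩⟩
    · by_contra hc
      by_cases hai : a i = 0
      · have := h1 i hai
        rw [hi, if_neg hc] at this
        linarith
      · have := h2 i hai
        rw [hi] at this; simp at this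
    · rw [h1 i ?_, if_pos hi, mul_zero]
      simp only [Finset.mem_insert, Finset.mem_singleton] at hi
      rcases hi with rfl | rfl <;> assumption
  have hbp : b p = 0 := (hb p).2 (by simp)
  have hbq : b q = 0 := (hb q).2 (by simp)
  have hbx : b x ≠ 0 := fun h0 => by simpa [hx] using (hb x).1 h0
  have key : ∀ c : ℝ, a - c • b ≠ 0 := by
    intro c hc
    have h1 := congrFun hc x
    have h2 := congrFun hc y
    simp [hax, hbx] at h1
    simp [hay, h1] at h2
  have hbF : ∀ i ∈ (β.erase p).erase q, b i ≠ 0 := fun i hi h0 => by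
    simp only [Finset.mem_erase] at hi
    simpa [hi.1, hi.2.1] using (hb i).1 h0
  -- Two zeros outside `p`, `q` cannot occur for the same slope, so the slopes are distinct.
  have hz : ∀ i j, i ≠ p → i ≠ q → j ≠ p → j ≠ q → i ≠ j → ∀ c : ℝ,
      a i - c * b i = 0 → a j - c * b j = 0 → False := by
    intro i j h1 h2 h3 h4 hij c hi hj
    refine key c (h.eq_zero _ (D.sub_mem haD (D.smul_mem c hbD)) {p, q, i, j} ?_ ?_)
    · rw [Finset.card_insert_of_notMem (by simp; tauto),
        Finset.card_insert_of_notMem (by simp; tauto), Finset.card_pair hij]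
    · intro k hk
      simp only [Finset.mem_insert, Finset.mem_singleton] at hk
      rcases hk with rfl | rfl | rfl | rfl <;> simp [*]
  obtain ⟨r, hr, hbal⟩ := exists_halving_slope _ hF b (fun i => a i / b i) (by
    intro i hi j hj hij
    by_contra hne
    have hbi := hbF i hi
    have hbj := hbF j hj
    simp only [Finset.coe_erase, Set.mem_sdiff, Set.mem_singleton_iff, Finset.mem_coe] at hi hj
    refine hz i j hi.1.2 hi.2 hj.1.2 hj.2 hne (a i / b i) (by field_simp; simp) ?_
    simp only at hij
    rw [hij]; field_simp; simp)
  have hbr := hbF r hr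
  simp only [Finset.mem_erase] at hr
  refine ⟨r, hr.2.2, hr.2.1, hr.1, a - (a r / b r) • b, D.sub_mem haD (D.smul_mem _ hbD),
    fun i => ⟨fun hi => ?_, fun hi => ?_⟩, ?_⟩
  · by_contra hc
    simp only [Finset.mem_insert, Finset.mem_singleton, not_or] at hc
    refine hz i r hc.1 hc.2.1 hr.2.1 hr.1 hc.2.2 (a r / b r) (by simpa using hi)
      (by field_simp; simp)
  · simp only [Finset.mem_insert, Finset.mem_singleton] at hi
    rcases hi with rfl | rfl | rfl <;> simp [*]
  · convert hbal using 2
    symm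
    refine (Finset.sum_congr rfl fun j hj => ?_).trans (Finset.sum_subset
      ((Finset.erase_subset _ _).trans (Finset.erase_subset _ _)) fun j hj hj' => ?_)
    · have := hbF j hj
      congr 2
      simp; field_simp
    · have : j = p ∨ j = q := by simp at hj'; tauto
      rcases this with rfl | rfl <;> simp [*]

/-! ### Cells and their extremal vertices -/

omit [Fintype ι] [DecidableEq ι] in
/-- Finitely many vectors off the line `ℝ ν` are avoided by a functional that kills `ν`. -/
theorem exists_functional {κ : Type*} [Finite κ] (ν : ι → ℝ) (w : κ → ι → ℝ)
    (hw : ∀ k, w k ∉ Submodule.span ℝ {ν}) :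
    ∃ X : (ι → ℝ) →ₗ[ℝ] ℝ, X ν = 0 ∧ ∀ k, X (w k) ≠ 0 := by
  obtain ⟨f, hf⟩ := Module.exists_dual_forall_apply_ne_zero (K := ℝ)
    (fun k => (Submodule.span ℝ {ν}).mkQ (w k)) (fun k h => hw k (by simpa using h))
  refine ⟨f.comp (Submodule.span ℝ {ν}).mkQ, ?_, hf⟩
  have : (Submodule.span ℝ {ν}).mkQ ν = 0 := by
    simp [Submodule.mem_span_singleton_self]
  rw [LinearMap.comp_apply, this, map_zero]

/-- The functions in `D` vanishing at `p` and `q` form a plane, which meets `ker Y`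
nontrivially. In the affine chart `Y = 1` this is the direction of the line `v p = v q = 0`. -/
theorem FourUniform.exists_edge {D : Submodule ℝ (ι → ℝ)} (h : FourUniform D)
    (hι : 4 ≤ Fintype.card ι) (Y : (ι → ℝ) →ₗ[ℝ] ℝ) (p q : ι) :
    ∃ e ∈ D, e ≠ 0 ∧ e p = 0 ∧ e q = 0 ∧ Y e = 0 := by
  obtain ⟨x, hx⟩ : ∃ x, x ∉ ({p, q} : Finset ι) := by
    by_contra! hc
    have := Finset.card_le_card (fun i _ => hc i : Finset.univ ⊆ ({p, q} : Finset ι))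
    have h2 := Finset.card_le_two (a := p) (b := q)
    rw [Finset.card_univ] at this
    omega
  obtain ⟨y, hy⟩ : ∃ y, y ∉ ({p, q, x} : Finset ι) := by
    by_contra! hc
    have := Finset.card_le_card (fun i _ => hc i : Finset.univ ⊆ ({p, q, x} : Finset ι))
    have h2 := Finset.card_le_three (a := p) (b := q) (c := x)
    rw [Finset.card_univ] at this
    omega
  simp only [Finset.mem_insert, Finset.mem_singleton, not_or] at hx hy
  obtain ⟨v, hvD, hv⟩ := h.exists_eq {p, q, x, y} Finset.card_le_four (Pi.single x 1)
  obtain ⟨w, hwD, hw⟩ := h.exists_eq {p, q, x, y} Finset.card_le_four (Pi.single y 1)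
  have hvp : v p = 0 := by rw [hv p (by simp)]; simp [Ne.symm hx.1]
  have hvq : v q = 0 := by rw [hv q (by simp)]; simp [Ne.symm hx.2]
  have hvx : v x = 1 := by rw [hv x (by simp)]; simp
  have hvy : v y = 0 := by rw [hv y (by simp)]; simp [hy.2.2]
  have hwp : w p = 0 := by rw [hw p (by simp)]; simp [Ne.symm hy.1]
  have hwq : w q = 0 := by rw [hw q (by simp)]; simp [Ne.symm hy.2.1]
  have hwy : w y = 1 := by rw [hw y (by simp)]; simp
  by_cases hYv : Y v = 0
  · exact ⟨v, hvD, fun h0 => by simp [h0] at hvx, hvp, hvq, hYv⟩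
  · refine ⟨Y w • v - Y v • w, D.sub_mem (D.smul_mem _ hvD) (D.smul_mem _ hwD), fun h0 => ?_,
      by simp [*], by simp [*], by simp [mul_comm]⟩
    have := congrFun h0 y
    simp [hvy, hwy, hYv] at this

/-- Around the vertex `u` of the chart `Y = 1`, the functional `X - X u • Y`, which vanishes at
`u`, is a combination of the three evaluations at the zeros `T` of `u`. The coefficients are nonzero
as soon as `X` is nonconstant along the three edge directions at `u`. -/
theorem FourUniform.exists_coeffs {D : Submodule ℝ (ι → ℝ)} (h : FourUniform D)
    (hι : 4 ≤ Fintype.card ι) (X Y : (ι → ℝ) →ₗ[ℝ] ℝ) (T : Finset ι) (hT : T.card = 3)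
    {u : ι → ℝ} (hu : u ∈ D) (huT : ∀ i, u i = 0 ↔ i ∈ T) (hYu : Y u = 1)
    (hedge : ∀ i ∈ T, ∃ e ∈ D, (∀ j ∈ T, j ≠ i → e j = 0) ∧ Y e = 0 ∧ X e ≠ 0) :
    ∃ a : ι → ℝ, (∀ i ∈ T, a i ≠ 0) ∧ ∀ v ∈ D, X v - X u * Y v = ∑ i ∈ T, a i * v i := by
  choose w hwD hw using fun i => h.exists_eq T (by omega) (Pi.single i 1)
  obtain ⟨x, hx⟩ : ∃ x, x ∉ T := by
    by_contra! hc
    have := Finset.card_le_card (fun i _ => hc i : Finset.univ ⊆ T)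
    rw [Finset.card_univ] at this
    omega
  have hux : u x ≠ 0 := fun h0 => hx ((huT x).1 h0)
  set L : (ι → ℝ) →ₗ[ℝ] ℝ := X - X u • Y with hL
  have hLv : ∀ v, L v = X v - X u * Y v := fun v => by simp [hL]
  have hexp : ∀ v ∈ D, L v = ∑ i ∈ T, L (w i) * v i := by
    intro v hv
    set z := v - ∑ i ∈ T, v i • w i with hz
    have hzD : z ∈ D := D.sub_mem hv (D.sum_mem fun i _ => D.smul_mem _ (hwD i))
    have hzT : ∀ j ∈ T, z j = 0 := by
      intro j hj
      have : ∑ i ∈ T, v i * w i j = v j := by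
        rw [Finset.sum_eq_single j]
        · rw [hw j j hj]; simp
        · intro i _ hij
          rw [hw i j hj]; simp [hij.symm]
        · exact fun hc => absurd hj hc
      simp [hz, this]
    have hz0 : z - (z x / u x) • u = 0 := by
      refine h.eq_zero _ (D.sub_mem hzD (D.smul_mem _ hu)) (insert x T) ?_ ?_
      · rw [Finset.card_insert_of_notMem hx]; omega
      · intro i hi
        rcases Finset.mem_insert.1 hi with rfl | hi
        · simp [hux]
        · simp [hzT i hi, (huT i).2 hi]
    have hLz : L z = 0 := by
      rw [sub_eq_zero.1 hz0, map_smul, hLv, hYu]; simp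
    have : L v = L z + ∑ i ∈ T, v i * L (w i) := by
      simp [hz, map_sub, map_sum]
    rw [this, hLz, zero_add]
    exact Finset.sum_congr rfl fun i _ => mul_comm _ _
  refine ⟨fun i => L (w i), fun i hi h0 => ?_, fun v hv => by rw [← hLv]; exact hexp v hv⟩
  obtain ⟨e, heD, he, hYe, hXe⟩ := hedge i hi
  have h1 := hexp e heD
  rw [Finset.sum_eq_zero, hLv, hYe] at h1
  · simp at h1; exact hXe h1
  · intro j hj
    by_cases hji : j = i
    · rw [hji]; simp only at h0; rw [h0, zero_mul]
    · rw [he j hj hji, mul_zero]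

/-- Three nonzero coefficients of a vanishing positive combination do not all have the same
sign. -/
theorem abs_sign_sum_eq_one {a b c x y z : ℝ} (ha : a ≠ 0) (hb : b ≠ 0) (hc : c ≠ 0)
    (hx : 0 < x) (hy : 0 < y) (hz : 0 < z) (h : a * x + b * y + c * z = 0) :
    |(SignType.sign a : ℤ) + SignType.sign b + SignType.sign c| = 1 := by
  rcases lt_or_gt_of_ne ha with ha | ha <;> rcases lt_or_gt_of_ne hb with hb | hb <;>
    rcases lt_or_gt_of_ne hc with hc | hc
  · have := mul_neg_of_neg_of_pos ha hx
    have := mul_neg_of_neg_of_pos hb hy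
    have := mul_neg_of_neg_of_pos hc hz
    linarith
  on_goal 7 =>
    have := mul_pos ha hx
    have := mul_pos hb hy
    have := mul_pos hc hz
    linarith
  all_goals simp [sign_neg, sign_pos, ha, hb, hc]

/-- `B` is the set of positive coordinates of a cell (a region of the arrangement of the
hyperplanes `v i = 0`) having the vertex `u`, normalised by `Y u = 1` and with zero set `T`, as the
minimiser of `ε * X` over the chart `Y = 1`: the coefficients `a` expanding `X - X u • Y` in
the evaluations at `T` have, up to the factor `ε`, the signs of the cell at `T`. -/
def IsCellVertex (D : Submodule ℝ (ι → ℝ)) (X Y : (ι → ℝ) →ₗ[ℝ] ℝ) (T : Finset ι) (ε : ℝ)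
    (B : Finset ι) : Prop :=
  ∃ u ∈ D, ∃ a : ι → ℝ, Y u = 1 ∧ (∀ i, u i = 0 ↔ i ∈ T) ∧
    (∀ v ∈ D, X v - X u * Y v = ∑ i ∈ T, a i * v i) ∧ (∀ i ∈ T, a i ≠ 0) ∧
    (∀ i ∈ T, i ∈ B ↔ 0 < ε * a i) ∧ ∀ i ∉ T, i ∈ B ↔ 0 < u i

omit [Fintype ι] in
/-- A cell has at most one such vertex for a given `ε`: two of them have the same value of
`ε * X`, so each vanishes on the zero set of the other. -/
theorem IsCellVertex.eq {D : Submodule ℝ (ι → ℝ)} {X Y : (ι → ℝ) →ₗ[ℝ] ℝ} {T T' : Finset ι}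
    {ε : ℝ} (hε : ε ≠ 0) {B : Finset ι} (h : IsCellVertex D X Y T ε B)
    (h' : IsCellVertex D X Y T' ε B) : T = T' := by
  obtain ⟨u, hu, a, hY, hT, hX, ha, hB, hB'⟩ := h
  obtain ⟨u', hu', a', hY', hT', hX', ha', hC, hC'⟩ := h'
  have h1 : ∀ i ∈ T, 0 ≤ ε * a i * u' i := by
    intro i hi
    by_cases hi' : i ∈ T'
    · simp [(hT' i).2 hi']
    · have := (hB i hi).symm.trans (hC' i hi')
      by_cases hp : 0 < ε * a i
      · exact (mul_pos hp (this.1 hp)).le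
      · exact mul_nonneg_of_nonpos_of_nonpos (not_lt.1 hp) (not_lt.1 fun hc => hp (this.2 hc))
  have h2 : ∀ i ∈ T', 0 ≤ ε * a' i * u i := by
    intro i hi'
    by_cases hi : i ∈ T
    · simp [(hT i).2 hi]
    · have := (hC i hi').symm.trans (hB' i hi)
      by_cases hp : 0 < ε * a' i
      · exact (mul_pos hp (this.1 hp)).le
      · exact mul_nonneg_of_nonpos_of_nonpos (not_lt.1 hp) (not_lt.1 fun hc => hp (this.2 hc))
  have e1 : ε * (X u' - X u) = ∑ i ∈ T, ε * a i * u' i := by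
    have := hX u' hu'
    rw [hY', mul_one] at this
    rw [this, Finset.mul_sum]
    exact Finset.sum_congr rfl fun i _ => by ring
  have e2 : ε * (X u - X u') = ∑ i ∈ T', ε * a' i * u i := by
    have := hX' u hu
    rw [hY, mul_one] at this
    rw [this, Finset.mul_sum]
    exact Finset.sum_congr rfl fun i _ => by ring
  have s1 := Finset.sum_nonneg h1
  have s2 := Finset.sum_nonneg h2
  have z1 : ∑ i ∈ T, ε * a i * u' i = 0 := by linarith
  have z2 : ∑ i ∈ T', ε * a' i * u i = 0 := by linarith
  refine Finset.Subset.antisymm (fun i hi => ?_) (fun i hi => ?_)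
  · have := (Finset.sum_eq_zero_iff_of_nonneg h1).1 z1 i hi
    simpa [hε, ha i hi, hT'] using this
  · have := (Finset.sum_eq_zero_iff_of_nonneg h2).1 z2 i hi
    simpa [hε, ha' i hi, hT] using this

/-- A vertex that is balanced on `β` is extremal for `X`, in one of the two directions, on a cell
balanced on `β`. Evaluating the expansion of `X - X u • Y` at `ν`, which is positive on `T ⊆ β`,
shows that the coefficients do not all have the same sign, so their signs sum to `±1`; choosing
`ε` opposite to the imbalance of `u` keeps the imbalance of the cell at most one. -/
theorem FourUniform.exists_cell {D : Submodule ℝ (ι → ℝ)} (h : FourUniform D)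
    (hι : 4 ≤ Fintype.card ι) (β : Finset ι) {ν : ι → ℝ} (hν : ν ∈ D) (hνβ : ∀ i ∈ β, 0 < ν i)
    (X Y : (ι → ℝ) →ₗ[ℝ] ℝ) (hX : X ν = 0) (hY : Y ν = 0) (T : Finset ι) (hT : T.card = 3)
    (hTβ : T ⊆ β) {u : ι → ℝ} (hu : u ∈ D) (huT : ∀ i, u i = 0 ↔ i ∈ T) (hYu : Y u = 1)
    (hbal : |∑ j ∈ β, (SignType.sign (u j) : ℤ)| ≤ 1)
    (hedge : ∀ i ∈ T, ∃ e ∈ D, (∀ j ∈ T, j ≠ i → e j = 0) ∧ Y e = 0 ∧ X e ≠ 0) :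
    ∃ ε : ℝ, (ε = 1 ∨ ε = -1) ∧ ∃ l ∈ D, (∀ i, l i ≠ 0) ∧
      |∑ j ∈ β, (SignType.sign (l j) : ℤ)| ≤ 1 ∧
      IsCellVertex D X Y T ε (Finset.univ.filter fun i => 0 < l i) := by
  obtain ⟨a, ha, hexp⟩ := h.exists_coeffs hι X Y T hT hu huT hYu hedge
  have hsum : |∑ i ∈ T, (SignType.sign (a i) : ℤ)| = 1 := by
    have h0 := hexp ν hν
    rw [hX, hY] at h0
    obtain ⟨p, q, r, hpq, hpr, hqr, rfl⟩ := Finset.card_eq_three.1 hT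
    rw [Finset.sum_insert (by simp [*]), Finset.sum_pair hqr] at h0 ⊢
    rw [← add_assoc]
    refine abs_sign_sum_eq_one (ha p (by simp)) (ha q (by simp)) (ha r (by simp))
      (hνβ p (hTβ (by simp))) (hνβ q (hTβ (by simp))) (hνβ r (hTβ (by simp))) ?_
    linarith
  obtain ⟨ε, hε, hεs⟩ : ∃ ε : ℝ, (ε = 1 ∨ ε = -1) ∧
      |∑ j ∈ β, (SignType.sign (u j) : ℤ) + ∑ i ∈ T, (SignType.sign (ε * a i) : ℤ)| ≤ 1 := by
    by_cases hc : |∑ j ∈ β, (SignType.sign (u j) : ℤ) + ∑ i ∈ T, (SignType.sign (a i) : ℤ)| ≤ 1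
    · exact ⟨1, Or.inl rfl, by simpa using hc⟩
    · refine ⟨-1, Or.inr rfl, ?_⟩
      simp only [neg_mul, one_mul, Left.sign_neg, SignType.coe_neg, Finset.sum_neg_distrib]
      grind
  have hε0 : ε ≠ 0 := by rcases hε with rfl | rfl <;> norm_num
  have hu0 : u ≠ 0 := fun h0 => by simp [h0] at hYu
  obtain ⟨l, hl, δ, hδ, hl1, hl2⟩ := h.perturb hu hu0 (fun i => ε * a i)
  have hs1 : ∀ i ∈ T, SignType.sign (l i) = SignType.sign (ε * a i) := by
    intro i hi
    rw [hl1 i ((huT i).2 hi), sign_mul, sign_pos hδ, one_mul]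
  have hs2 : ∀ i ∉ T, SignType.sign (l i) = SignType.sign (u i) := by
    intro i hi
    have := hl2 i (fun h0 => hi ((huT i).1 h0))
    rcases pos_and_pos_or_neg_and_neg_of_mul_pos this with ⟨h1, h2⟩ | ⟨h1, h2⟩
    · rw [sign_pos h1, sign_pos h2]
    · rw [sign_neg h1, sign_neg h2]
  refine ⟨ε, hε, l, hl, fun i h0 => ?_, ?_, u, hu, a, hYu, huT, hexp, ha, fun i hi => ?_,
    fun i hi => ?_⟩
  · by_cases hi : i ∈ T
    · have := hs1 i hi
      rw [h0, sign_zero, eq_comm, sign_eq_zero_iff] at this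
      exact mul_ne_zero hε0 (ha i hi) this
    · have := hs2 i hi
      rw [h0, sign_zero, eq_comm, sign_eq_zero_iff] at this
      exact hi ((huT i).1 this)
  · convert hεs using 2
    rw [← Finset.sum_sdiff hTβ, ← Finset.sum_sdiff (f := fun j => (SignType.sign (u j) : ℤ)) hTβ,
      Finset.sum_eq_zero (s := T) (f := fun j => (SignType.sign (u j) : ℤ)), add_zero]
    · congr 1
      · exact Finset.sum_congr rfl fun i hi => by rw [hs2 i (Finset.mem_sdiff.1 hi).2]
      · exact Finset.sum_congr rfl fun i hi => by rw [hs1 i hi]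
    · intro i hi
      simp [(huT i).2 hi]
  · have := hs1 i hi
    simp only [Finset.mem_filter, Finset.mem_univ, true_and]
    rw [← sign_eq_one_iff, this, sign_eq_one_iff]
  · have := hs2 i hi
    simp only [Finset.mem_filter, Finset.mem_univ, true_and]
    rw [← sign_eq_one_iff, this, sign_eq_one_iff]

/-- If `D` contains `ν` positive on `β`, the number of sign patterns of nowhere-zero elements of
`D` that are balanced on `β` is at least `m (m - 1) / 12`, where `m` is the size of `β`. Each ordered
pair in `β` extends to the zero set `T` of a balanced vertex; that vertex yields a balanced
cell and a direction `ε`, which determine `T` and hence leave at most six ordered pairs. -/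
theorem FourUniform.card_balanced {D : Submodule ℝ (ι → ℝ)} (h : FourUniform D)
    (hι : 4 ≤ Fintype.card ι) (β : Finset ι) (hβ : 3 ≤ β.card) {ν : ι → ℝ} (hν : ν ∈ D)
    (hνβ : ∀ i ∈ β, 0 < ν i) (S : Finset (Finset ι))
    (hS : ∀ l ∈ D, (∀ i, l i ≠ 0) → |∑ j ∈ β, (SignType.sign (l j) : ℤ)| ≤ 1 →
      (Finset.univ.filter fun i => 0 < l i) ∈ S) :
    β.card * β.card - β.card ≤ 12 * S.card := by
  have hspan : ∀ i ∈ β, ∀ v : ι → ℝ, v ≠ 0 → v i = 0 → v ∉ Submodule.span ℝ {ν} := by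
    intro i hi v hv hvi hc
    obtain ⟨c, rfl⟩ := Submodule.mem_span_singleton.1 hc
    have : c = 0 := by simpa [(hνβ i hi).ne'] using hvi
    exact hv (by simp [this])
  have hv := fun k : β.offDiag =>
    h.exists_halving_vertex hι β hβ (Finset.mem_offDiag.1 k.2).2.2
  choose r hrβ hrp hrq u hu huT hbal using hv
  have hT3 : ∀ k : β.offDiag, ({k.1.1, k.1.2, r k} : Finset ι).card = 3 := by
    intro k
    rw [Finset.card_insert_of_notMem, Finset.card_pair (hrq k).symm]
    simp [(hrp k).symm, (Finset.mem_offDiag.1 k.2).2.2]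
  have hu0 : ∀ k, u k ≠ 0 := by
    intro k h0
    have h1 : (Finset.univ : Finset ι) ⊆ {k.1.1, k.1.2, r k} := fun i _ =>
      (huT k i).1 (by simp [h0])
    have := Finset.card_le_card h1
    rw [hT3, Finset.card_univ] at this
    omega
  -- The functional `Y` comes first: the edge directions that `X` has to avoid depend on it.
  obtain ⟨Y, hYν, hYu⟩ := exists_functional ν u fun k =>
    hspan k.1.1 (Finset.mem_offDiag.1 k.2).1 _ (hu0 k) ((huT k _).2 (by simp))
  choose e heD he0 hep heq hYe using fun k : β.offDiag => h.exists_edge hι Y k.1.1 k.1.2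
  obtain ⟨X, hXν, hXe⟩ := exists_functional ν e fun k =>
    hspan k.1.1 (Finset.mem_offDiag.1 k.2).1 _ (he0 k) (hep k)
  have hdata : ∀ k ∈ β.offDiag, ∃ (T : Finset ι) (b : Finset ι × ℝ), k ∈ T.offDiag ∧ T.card = 3 ∧
      (b.2 = 1 ∨ b.2 = -1) ∧ b.1 ∈ S ∧ IsCellVertex D X Y T b.2 b.1 := by
    intro k hk
    set κ : β.offDiag := ⟨k, hk⟩
    set T : Finset ι := {k.1, k.2, r κ} with hT
    have hTβ : T ⊆ β := by
      intro i hi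
      simp only [hT, Finset.mem_insert, Finset.mem_singleton] at hi
      rcases hi with rfl | rfl | rfl
      exacts [(Finset.mem_offDiag.1 hk).1, (Finset.mem_offDiag.1 hk).2.1, hrβ κ]
    obtain ⟨ε, hε, l, hl, hl0, hlbal, hcell⟩ := h.exists_cell hι β hν hνβ X Y hXν hYν T (hT3 κ) hTβ
      (D.smul_mem (Y (u κ))⁻¹ (hu κ)) (fun i => Iff.trans (by simp [hYu κ]) (huT κ i))
      (by simp [hYu κ]) (by
        have hs : SignType.sign (Y (u κ))⁻¹ = 1 ∨ SignType.sign (Y (u κ))⁻¹ = -1 := by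
          rcases lt_or_gt_of_ne (inv_ne_zero (hYu κ)) with h | h
          · exact Or.inr (sign_neg h)
          · exact Or.inl (sign_pos h)
        have := hbal κ
        rcases hs with hs | hs <;> simpa [sign_mul, hs, Finset.sum_neg_distrib] using this)
      (by
        intro i hi
        have hc : (T.erase i).card = 2 := by rw [Finset.card_erase_of_mem hi, hT3 κ]
        obtain ⟨x, y, hxy, hxyT⟩ := Finset.card_eq_two.1 hc
        have hx : x ∈ T := Finset.mem_of_mem_erase (hxyT ▸ by simp : x ∈ T.erase i)
        have hy : y ∈ T := Finset.mem_of_mem_erase (hxyT ▸ by simp : y ∈ T.erase i)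
        let κ' : β.offDiag := ⟨(x, y), Finset.mem_offDiag.2 ⟨hTβ hx, hTβ hy, hxy⟩⟩
        refine ⟨e κ', heD κ', fun j hj hji => ?_, hYe κ', hXe κ'⟩
        have : j ∈ T.erase i := Finset.mem_erase.2 ⟨hji, hj⟩
        rw [hxyT] at this
        simp only [Finset.mem_insert, Finset.mem_singleton] at this
        rcases this with rfl | rfl
        exacts [hep κ', heq κ'])
    exact ⟨T, (Finset.univ.filter fun i => 0 < l i, ε), Finset.mem_offDiag.2
      ⟨by simp [hT], by simp [hT], (Finset.mem_offDiag.1 hk).2.2⟩, hT3 κ, hε, hS l hl hl0 hlbal,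
      hcell⟩
  choose! T b hkT hT hε hbS hcell using hdata
  have hmaps : ∀ k ∈ β.offDiag, b k ∈ S ×ˢ ({1, -1} : Finset ℝ) := fun k hk =>
    Finset.mem_product.2 ⟨hbS k hk, by simpa using hε k hk⟩
  have hcount := Finset.card_le_mul_card_image_of_maps_to hmaps 6 (by
    intro c hc
    by_cases hne : (β.offDiag.filter fun k => b k = c).Nonempty
    · obtain ⟨k, hkc⟩ := hne
      have hk : k ∈ β.offDiag := (Finset.mem_filter.1 hkc).1
      obtain rfl : b k = c := (Finset.mem_filter.1 hkc).2
      have hsub : (β.offDiag.filter fun k' => b k' = b k) ⊆ (T k).offDiag := by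
        intro k' hk'
        obtain ⟨hk', hb⟩ := Finset.mem_filter.1 hk'
        have hε0 : (b k).2 ≠ 0 := by rcases hε k hk with h | h <;> rw [h] <;> norm_num
        rw [(hcell k hk).eq hε0 (hb ▸ hcell k' hk')]
        exact hkT k' hk'
      refine (Finset.card_le_card hsub).trans ?_
      rw [Finset.offDiag_card, hT k hk]
    · rw [Finset.not_nonempty_iff_eq_empty.1 hne]; simp)
  rw [Finset.card_product, Finset.offDiag_card, Finset.card_pair (by norm_num)] at hcount
  omega

end Abstract

section Geometry

/-! ### Relative interiors of simplices -/

/-- A point on the segment from a point of a convex set to a relative interior point, other than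
the first endpoint, is a relative interior point. -/
theorem mem_intrinsicInterior_of_lineMap {E : Type*} [NormedAddCommGroup E] [NormedSpace ℝ E]
    {s : Set E} (hs : Convex ℝ s) {y z : E} (hy : y ∈ intrinsicInterior ℝ s) (hz : z ∈ s) {c : ℝ}
    (hc0 : 0 < c) (hc1 : c ≤ 1) : z + c • (y - z) ∈ intrinsicInterior ℝ s := by
  obtain ⟨y', hy', rfl⟩ := hy
  have hzA : z ∈ affineSpan ℝ s := subset_affineSpan ℝ s hz
  have hmem : ∀ (b : ℝ) (w : affineSpan ℝ s), z + b • ((w : E) - z) ∈ affineSpan ℝ s := by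
    intro b w
    have := AffineMap.lineMap_mem b hzA w.2
    rwa [AffineMap.lineMap_apply, vsub_eq_sub, vadd_eq_add, add_comm] at this
  let g : affineSpan ℝ s → affineSpan ℝ s := fun w => ⟨z + c⁻¹ • ((w : E) - z), hmem _ w⟩
  have hg : Continuous g := by
    apply Continuous.subtype_mk
    fun_prop
  refine ⟨⟨z + c • ((y' : E) - z), hmem c y'⟩, ?_, rfl⟩
  refine mem_interior.2 ⟨g ⁻¹' interior (Subtype.val ⁻¹' s), ?_, isOpen_interior.preimage hg, ?_⟩
  · intro w hw
    have hgw' : g w ∈ (Subtype.val ⁻¹' s : Set (affineSpan ℝ s)) := interior_subset hw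
    have hgw : z + c⁻¹ • ((w : E) - z) ∈ s := hgw'
    have := hs.add_smul_sub_mem hz hgw ⟨hc0.le, hc1⟩
    simpa [smul_smul, hc0.ne'] using this
  · have : g ⟨z + c • ((y' : E) - z), hmem c y'⟩ = y' := by
      apply Subtype.ext
      simp [g, smul_smul, hc0.ne']
    rw [Set.mem_preimage, this]
    exact hy'

/-- Convex combinations with positive weights are relative interior points; no affine
independence is needed. -/
theorem sum_mem_intrinsicInterior {E : Type*} [NormedAddCommGroup E] [NormedSpace ℝ E]
    [FiniteDimensional ℝ E] (B : Finset E) (hB : B.Nonempty) (w : E → ℝ) (hw : ∀ x ∈ B, 0 < w x)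
    (hw1 : ∑ x ∈ B, w x = 1) :
    ∑ x ∈ B, w x • x ∈ intrinsicInterior ℝ (convexHull ℝ (B : Set E)) := by
  obtain ⟨y, hy⟩ := (Set.Nonempty.intrinsicInterior (convex_convexHull ℝ (B : Set E))
    (hB.coe_sort.elim fun b => ⟨b.1, subset_convexHull ℝ _ b.2⟩))
  obtain ⟨v, hv0, hv1, hvy⟩ := Finset.mem_convexHull'.1 (intrinsicInterior_subset hy)
  obtain ⟨m, hm, hmin⟩ := B.exists_min_image w hB
  -- A convex combination of `y` and a point of the hull with weight `c` on `y`.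
  set c : ℝ := min (w m) (1 / 2) with hc
  have hc0 : 0 < c := lt_min (hw m hm) (by norm_num)
  have hc1 : c < 1 := (min_le_right _ _).trans_lt (by norm_num)
  have hvle : ∀ x ∈ B, v x ≤ 1 := fun x hx => hv1 ▸ Finset.single_le_sum hv0 hx
  have hz : ∑ x ∈ B, ((w x - c * v x) / (1 - c)) • x ∈ convexHull ℝ (B : Set E) := by
    refine Finset.mem_convexHull'.2 ⟨fun x => (w x - c * v x) / (1 - c), fun x hx => ?_, ?_, rfl⟩
    · refine div_nonneg ?_ (by linarith)
      have h1 : c ≤ w x := (min_le_left _ _).trans (hmin x hx)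
      have h2 : c * v x ≤ c * 1 := mul_le_mul_of_nonneg_left (hvle x hx) hc0.le
      linarith
    · rw [← Finset.sum_div, Finset.sum_sub_distrib, ← Finset.mul_sum, hw1, hv1, mul_one]
      exact div_self (by linarith)
  have := mem_intrinsicInterior_of_lineMap (convex_convexHull ℝ _) hy hz hc0 hc1.le
  convert this using 1
  rw [← hvy, ← Finset.sum_sub_distrib, Finset.smul_sum, ← Finset.sum_add_distrib]
  refine Finset.sum_congr rfl fun x _ => ?_
  rw [← sub_smul, smul_smul, ← add_smul]
  congr 1
  have : (1 - c) ≠ 0 := by linarith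
  field_simp
  ring

variable {d : ℕ}

/-! ### Affine dependencies of a point set -/

/-- The space of affine dependencies of `Q` (the row space of a Gale dual): weights on `Q` with
sum zero and weighted sum of the points zero. -/
def depSpace (Q : Finset (Pt d)) : Submodule ℝ ({x // x ∈ Q} → ℝ) where
  carrier := {l | ∑ i, l i = 0 ∧ ∑ i, l i • (i : Pt d) = 0}
  add_mem' := by
    rintro a b ⟨h1, h2⟩ ⟨h3, h4⟩
    exact ⟨by simp only [Pi.add_apply, Finset.sum_add_distrib, h1, h3, add_zero],
      by simp only [Pi.add_apply, add_smul, Finset.sum_add_distrib, h2, h4, add_zero]⟩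
  zero_mem' := by simp
  smul_mem' := by
    rintro c a ⟨h1, h2⟩
    exact ⟨by simp only [Pi.smul_apply, smul_eq_mul, ← Finset.mul_sum, h1, mul_zero],
      by simp only [Pi.smul_apply, smul_eq_mul, mul_smul, ← Finset.smul_sum, h2, smul_zero]⟩

theorem mem_depSpace {Q : Finset (Pt d)} {l : {x // x ∈ Q} → ℝ} :
    l ∈ depSpace Q ↔ ∑ i, l i = 0 ∧ ∑ i, l i • (i : Pt d) = 0 := Iff.rfl

theorem four_le_finrank_depSpace {Q : Finset (Pt d)} (hQ : Q.card = d + 5) :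
    4 ≤ Module.finrank ℝ (depSpace Q) := by
  let f : ({x // x ∈ Q} → ℝ) →ₗ[ℝ] ℝ × Pt d :=
    (∑ i, LinearMap.proj i).prod (Fintype.linearCombination ℝ Subtype.val)
  have hf : LinearMap.ker f = depSpace Q := by
    ext l
    simp [f, mem_depSpace, Fintype.linearCombination_apply]
  have h1 := f.finrank_range_add_finrank_ker
  have h2 := (LinearMap.range f).finrank_le
  rw [hf] at h1
  simp [hQ] at h1 h2
  omega

theorem depSpace_eq_zero {Q : Finset (Pt d)} (hQ : Q.card = d + 5) (hG : GenPos d Q)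
    (v : {x // x ∈ Q} → ℝ) (hv : v ∈ depSpace Q) (T : Finset {x // x ∈ Q}) (hT : 4 ≤ T.card)
    (hvT : ∀ i ∈ T, v i = 0) : v = 0 := by
  set S : Finset (Pt d) := Tᶜ.map (Function.Embedding.subtype _) with hS
  have hScard : S.card ≤ d + 1 := by
    rw [hS, Finset.card_map, Finset.card_compl, Fintype.card_coe, hQ]
    omega
  have hSQ : S ⊆ Q := by
    intro x hx
    simp only [hS, Finset.mem_map] at hx
    obtain ⟨i, -, rfl⟩ := hx
    exact i.2
  let v' : Pt d → ℝ := fun x => if h : x ∈ Q then v ⟨x, h⟩ else 0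
  have hv' : ∀ i : {x // x ∈ Q}, v' i = v i := fun i => by simp [v']
  have hai := affineIndependent_iff.1 (hG S hSQ hScard)
  have key := hai Finset.univ (fun e => v' e) (by
    have : ∑ x ∈ S, v' x = 0 := by
      rw [hS, Finset.sum_map]
      simp only [Function.Embedding.subtype_apply, hv']
      rw [← hv.1]
      exact Finset.sum_subset (Finset.subset_univ _) fun i _ hi => hvT i (by simpa using hi)
    rw [← this]
    exact Finset.sum_coe_sort S v') (by
    have : ∑ x ∈ S, v' x • x = 0 := by
      rw [hS, Finset.sum_map]
      simp only [Function.Embedding.subtype_apply, hv']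
      rw [← hv.2]
      exact Finset.sum_subset (Finset.subset_univ _) fun i _ hi => by
        rw [hvT i (by simpa using hi), zero_smul]
    rw [← this]
    exact Finset.sum_coe_sort S (fun x => v' x • x))
  funext i
  by_cases hi : i ∈ T
  · exact hvT i hi
  · have hiS : (i : Pt d) ∈ (S : Set (Pt d)) := by
      rw [hS]; simp [hi]
    have := key ⟨i, hiS⟩ (Finset.mem_univ _)
    rw [← hv' i]
    exact this

/-- General position makes the four-dimensional space of dependencies of `d + 5` points
uniform, since every nonzero dependency has at least `d + 2` nonzero weights. -/
theorem fourUniform_depSpace {Q : Finset (Pt d)} (hQ : Q.card = d + 5) (hG : GenPos d Q) :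
    FourUniform (depSpace Q) where
  eq_zero := depSpace_eq_zero hQ hG
  exists_eq := by
    intro T hT g
    obtain ⟨T', hTT', hT'⟩ := Finset.exists_superset_card_eq hT (by simp; omega)
    let E : depSpace Q →ₗ[ℝ] (T' → ℝ) :=
      (LinearMap.funLeft ℝ ℝ (Subtype.val : T' → {x // x ∈ Q})).comp (depSpace Q).subtype
    have hinj : Function.Injective E := by
      rw [← LinearMap.ker_eq_bot, LinearMap.ker_eq_bot']
      intro v hv
      apply Subtype.ext
      exact depSpace_eq_zero hQ hG v.1 v.2 T' hT'.ge fun i hi => congrFun hv ⟨i, hi⟩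
    have hle := LinearMap.finrank_le_finrank_of_injective hinj
    have hfr : Module.finrank ℝ (depSpace Q) = Module.finrank ℝ (T' → ℝ) := by
      refine le_antisymm hle ?_
      simpa [hT'] using four_le_finrank_depSpace hQ
    obtain ⟨v, hv⟩ := (LinearMap.injective_iff_surjective_of_finrank_eq_finrank hfr).1 hinj
      fun i => g i
    exact ⟨v, v.2, fun i hi => congrFun hv ⟨i, hTT' hi⟩⟩

/-- If `S` is not a face, no hyperplane strictly separates the affine span of `S` from the convex
hull of `Q \ S`, so the two meet; a common point is a dependency that is nonnegative off `S`. -/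
theorem exists_dep_of_not_isFaceOf {Q S : Finset (Pt d)} (hSQ : S ⊆ Q) (hS : ¬ IsFaceOf d S Q) :
    ∃ l ∈ depSpace Q, l ≠ 0 ∧ ∀ i : {x // x ∈ Q}, (i : Pt d) ∉ S → 0 ≤ l i := by
  have hne : ¬ Disjoint (convexHull ℝ ((Q \ S : Finset (Pt d)) : Set (Pt d)))
      (affineSpan ℝ (S : Set (Pt d)) : Set (Pt d)) := by
    intro hdisj
    apply hS
    obtain ⟨f, a, b, hfa, hab, hfb⟩ := geometric_hahn_banach_compact_closed
      (convex_convexHull ℝ _) ((Finset.finite_toSet (Q \ S)).isCompact_convexHull (𝕜 := ℝ))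
      (affineSpan ℝ (S : Set (Pt d))).convex
      (AffineSubspace.closed_of_finiteDimensional _) hdisj
    refine ⟨hSQ, f.toLinearMap, ?_⟩
    rcases S.eq_empty_or_nonempty with rfl | ⟨x₀, hx₀⟩
    · refine ⟨a, by simp, fun y hy _ => hfa y (subset_convexHull ℝ _ (by simpa using hy))⟩
    have hx₀A : x₀ ∈ affineSpan ℝ (S : Set (Pt d)) := subset_affineSpan ℝ _ hx₀
    refine ⟨f x₀, fun x hx => ?_, fun y hy hyS => ?_⟩
    · -- A functional bounded below along a line is constant on it.
      by_contra hc
      have hc' : f x - f x₀ ≠ 0 := sub_ne_zero.2 hc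
      have hxA : x ∈ affineSpan ℝ (S : Set (Pt d)) := subset_affineSpan ℝ _ hx
      have := hfb _ (AffineMap.lineMap_mem ((b - f x₀) / (f x - f x₀)) hx₀A hxA)
      rw [AffineMap.lineMap_apply, vsub_eq_sub, vadd_eq_add, map_add, map_smul, map_sub,
        smul_eq_mul, div_mul_cancel₀ _ hc'] at this
      linarith
    · have h1 := hfa y (subset_convexHull ℝ _ (by simp [hy, hyS]))
      have h2 := hfb x₀ hx₀A
      exact h1.trans (hab.trans h2)
  obtain ⟨z, hz1, hz2⟩ := Set.not_disjoint_iff.1 hne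
  obtain ⟨w, hw0, hw1, hwz⟩ := Finset.mem_convexHull'.1 hz1
  have hz2' : z ∈ affineSpan ℝ (Set.range (Subtype.val : {x // x ∈ S} → Pt d)) := by
    rw [Subtype.range_coe_subtype]; exact hz2
  obtain ⟨v, hv1, hvz⟩ := eq_affineCombination_of_mem_affineSpan_of_fintype hz2'
  rw [Finset.affineCombination_eq_linear_combination _ _ _ hv1] at hvz
  let v' : Pt d → ℝ := fun x => if h : x ∈ S then v ⟨x, h⟩ else 0
  have hv' : ∀ i : {x // x ∈ S}, v' i = v i := fun i => by simp [v']
  have hv1' : ∑ x ∈ S, v' x = 1 := by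
    rw [← hv1, ← Finset.sum_coe_sort S]; simp only [hv']
  have hvz' : ∑ x ∈ S, v' x • x = z := by
    rw [hvz, ← Finset.sum_coe_sort S]; simp only [hv']
  let l : Pt d → ℝ := fun x => if x ∈ S then - v' x else w x
  have hlS : ∀ x ∈ S, l x = - v' x := fun x hx => by simp [l, hx]
  have hlS' : ∀ x ∈ Q \ S, l x = w x := fun x hx => by simp [l, (Finset.mem_sdiff.1 hx).2]
  refine ⟨fun i => l i, ⟨?_, ?_⟩, fun h0 => ?_, fun i hi => ?_⟩
  · rw [Finset.sum_coe_sort Q l, ← Finset.sum_sdiff hSQ, Finset.sum_congr rfl hlS',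
      Finset.sum_congr rfl hlS, hw1, Finset.sum_neg_distrib, hv1']
    ring
  · rw [Finset.sum_coe_sort Q (fun x => l x • x), ← Finset.sum_sdiff hSQ,
      Finset.sum_congr rfl fun x hx => by rw [hlS' x hx],
      Finset.sum_congr (s₁ := S) rfl fun x hx => by rw [hlS x hx, neg_smul],
      hwz, Finset.sum_neg_distrib, hvz']
    simp
  · have : ∑ x ∈ Q \ S, w x = 0 := Finset.sum_eq_zero fun x hx => by
      rw [← hlS' x hx]
      exact congrFun h0 ⟨x, (Finset.mem_sdiff.1 hx).1⟩
    rw [hw1] at this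
    exact one_ne_zero this
  · have hm : (i : Pt d) ∈ Q \ S := Finset.mem_sdiff.2 ⟨i.2, hi⟩
    simp only
    rw [hlS' _ hm]
    exact hw0 _ hm

/-! ### Crossing partitions from dependencies -/

/-- The positive and the negative part of a nowhere-zero dependency cross (a Radon partition of
the whole of `Q`). -/
theorem dep_crossing {Q : Finset (Pt d)} (hQ : Q.Nonempty) {l : {x // x ∈ Q} → ℝ}
    (hl : l ∈ depSpace Q) (hl0 : ∀ i, l i ≠ 0) :
    (intrinsicInterior ℝ (convexHull ℝ
        (((Finset.univ.filter fun i => 0 < l i).map (Function.Embedding.subtype _) :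
          Finset (Pt d)) : Set (Pt d))) ∩
      intrinsicInterior ℝ (convexHull ℝ
        (((Finset.univ.filter fun i => 0 < l i)ᶜ.map (Function.Embedding.subtype _) :
          Finset (Pt d)) : Set (Pt d)))).Nonempty := by
  set P : Finset {x // x ∈ Q} := Finset.univ.filter fun i => 0 < l i with hP
  have hPpos : ∀ i ∈ P, 0 < l i := fun i hi => (Finset.mem_filter.1 hi).2
  have hPneg : ∀ i ∈ Pᶜ, l i < 0 := fun i hi => by
    have : ¬ 0 < l i := by simpa [hP] using hi
    exact lt_of_le_of_ne (not_lt.1 this) (hl0 i)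
  have hs : ∑ i ∈ P, l i = - ∑ i ∈ Pᶜ, l i := by
    have := Finset.sum_add_sum_compl P l
    rw [hl.1] at this
    linarith
  have hs' : ∑ i ∈ P, l i • (i : Pt d) = - ∑ i ∈ Pᶜ, l i • (i : Pt d) := by
    have := Finset.sum_add_sum_compl P fun i => l i • (i : Pt d)
    rw [hl.2] at this
    exact eq_neg_of_add_eq_zero_left this
  obtain ⟨x, hx⟩ := hQ
  have hPne : P.Nonempty := by
    by_contra hc
    rw [Finset.not_nonempty_iff_eq_empty] at hc
    have h1 : ∑ i ∈ Pᶜ, l i < 0 :=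
      Finset.sum_neg hPneg ⟨⟨x, hx⟩, by simp [hc]⟩
    rw [hc, Finset.sum_empty] at hs
    rw [hc] at h1
    linarith
  have hσ : 0 < ∑ i ∈ P, l i := Finset.sum_pos hPpos hPne
  have hPcne : Pᶜ.Nonempty := by
    by_contra hc
    rw [Finset.not_nonempty_iff_eq_empty] at hc
    rw [hc, Finset.sum_empty] at hs
    linarith
  set σ := ∑ i ∈ P, l i with hσdef
  let l' : Pt d → ℝ := fun x => if h : x ∈ Q then l ⟨x, h⟩ else 0
  have hl' : ∀ i : {x // x ∈ Q}, l' i = l i := fun i => by simp [l']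
  have h1 := sum_mem_intrinsicInterior (P.map (Function.Embedding.subtype _)) (hPne.map)
    (fun x => l' x / σ) (by
      intro x hx
      obtain ⟨i, hi, rfl⟩ := Finset.mem_map.1 hx
      simp only [Function.Embedding.subtype_apply, hl']
      exact div_pos (hPpos i hi) hσ) (by
      rw [Finset.sum_map]
      simp only [Function.Embedding.subtype_apply, hl']
      rw [← Finset.sum_div]; exact div_self hσ.ne')
  have h2 := sum_mem_intrinsicInterior (Pᶜ.map (Function.Embedding.subtype _)) (hPcne.map)
    (fun x => - l' x / σ) (by
      intro x hx
      obtain ⟨i, hi, rfl⟩ := Finset.mem_map.1 hx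
      simp only [Function.Embedding.subtype_apply, hl']
      exact div_pos (neg_pos.2 (hPneg i hi)) hσ) (by
      rw [Finset.sum_map]
      simp only [Function.Embedding.subtype_apply, hl']
      rw [← Finset.sum_div, Finset.sum_neg_distrib, ← hs]; exact div_self hσ.ne')
  refine ⟨_, h1, ?_⟩
  convert h2 using 1
  rw [Finset.sum_map, Finset.sum_map]
  simp only [Function.Embedding.subtype_apply, hl']
  have e : ∀ c : ℝ, c / σ = σ⁻¹ * c := fun c => by ring
  simp only [e, mul_smul, neg_smul, smul_neg, Finset.sum_neg_distrib, ← Finset.smul_sum]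
  rw [hs', smul_neg]

/-- A sign pattern balanced on `β` is globally unbalanced by at most the number of other points. -/
theorem two_mul_card_pos {ι : Type*} [Fintype ι] [DecidableEq ι] (β : Finset ι) (l : ι → ℝ)
    (hl : ∀ i, l i ≠ 0) (hbal : |∑ j ∈ β, (SignType.sign (l j) : ℤ)| ≤ 1) :
    |(2 * (Finset.univ.filter fun i => 0 < l i).card - Fintype.card ι : ℤ)| ≤ 1 + βᶜ.card := by
  have h1 : (∑ j, (SignType.sign (l j) : ℤ)) =
      2 * (Finset.univ.filter fun i => 0 < l i).card - Fintype.card ι := by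
    have : ∀ j, (SignType.sign (l j) : ℤ) = 2 * (if 0 < l j then 1 else 0) - 1 := by
      intro j
      rcases lt_or_gt_of_ne (hl j) with h | h
      · simp [sign_neg h, not_lt.2 h.le]
      · simp [sign_pos h, h]
    simp only [this, Finset.sum_sub_distrib, ← Finset.mul_sum, Finset.sum_boole]
    simp
  rw [← h1, ← Finset.sum_add_sum_compl β]
  refine (abs_add_le _ _).trans (add_le_add hbal ?_)
  refine (Finset.abs_sum_le_sum_abs _ _).trans ?_
  refine (Finset.sum_le_card_nsmul _ _ 1 fun i _ => ?_).trans (by simp)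
  cases SignType.sign (l i) <;> simp

theorem crossingPartitions_finite (Q : Finset (Pt d)) (k : ℕ) :
    (crossingPartitions d Q k).Finite := by
  refine ((Q.powerset ×ˢ Q.powerset).finite_toSet.image fun p => s(p.1, p.2)).subset ?_
  rintro p ⟨B, C, rfl, rfl, -⟩
  exact ⟨(B, C), Finset.mem_coe.2 (Finset.mem_product.2 ⟨Finset.mem_powerset.2
    Finset.subset_union_left, Finset.mem_powerset.2 Finset.subset_union_right⟩), rfl⟩

/-- An unordered partition comes from at most two subsets, its two parts. -/
theorem card_le_two_mul_ncard (Q : Finset (Pt d)) (k : ℕ) (S : Finset (Finset {x // x ∈ Q}))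
    (hS : ∀ B ∈ S, s(B.map (Function.Embedding.subtype _), Bᶜ.map (Function.Embedding.subtype _)) ∈
      crossingPartitions d Q k) :
    S.card ≤ 2 * (crossingPartitions d Q k).ncard := by
  have hfin := crossingPartitions_finite Q k
  rw [Set.ncard_eq_toFinset_card _ hfin]
  refine Finset.card_le_mul_card_image_of_maps_to (f := fun B =>
    s(B.map (Function.Embedding.subtype _), Bᶜ.map (Function.Embedding.subtype _)))
    (fun B hB => hfin.mem_toFinset.2 (hS B hB)) 2 ?_
  intro p _
  by_cases hne : (S.filter fun B => s(B.map (Function.Embedding.subtype _),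
      Bᶜ.map (Function.Embedding.subtype _)) = p).Nonempty
  · obtain ⟨B, hB⟩ := hne
    obtain ⟨-, rfl⟩ := Finset.mem_filter.1 hB
    refine (Finset.card_le_card (t := {B, Bᶜ}) fun B' hB' => ?_).trans Finset.card_le_two
    have := (Finset.mem_filter.1 hB').2
    simp only [Sym2.eq_iff, Finset.map_inj] at this
    rcases this with h | h <;> simp [h.1]
  · rw [Finset.not_nonempty_iff_eq_empty.1 hne]; simp

end Geometry

/-- If `d + 5` points in general position form the vertex set of a
`d`-dimensional `t`-neighborly but not `(t+1)`-neighborly polytope, there are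
`Ω(d²)` crossing partitions with both parts of size at least `⌈(d+3-t)/2⌉`. -/
theorem crossing_partitions_t_neighborly :
    ∀ t : ℕ, 1 ≤ t →
      ∃ (c : ℝ) (d₀ : ℕ), 0 < c ∧
        ∀ d : ℕ, d₀ ≤ d → ∀ Q : Finset (Pt d), Q.card = d + 5 → GenPos d Q →
          ConvexPos d Q → affineSpan ℝ (Q : Set (Pt d)) = ⊤ →
          Neighborly d t Q → ¬ Neighborly d (t + 1) Q →
          c * d ^ 2 ≤ ((crossingPartitions d Q ((d + 3 - t + 1) / 2)).ncard : ℝ) := by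
  intro t _
  -- The set `β` below has size `m ≥ d + 4 - t ≥ d / 2 + 1`, and twice the number of partitions is
  -- at least `m (m - 1) / 12`, whence the constant `1 / 96`.
  refine ⟨1 / 96, 2 * t + 10, by norm_num, fun d hd Q hQ hG _ _ _ hnot => ?_⟩
  obtain ⟨S, hSQ, hScard, hface⟩ : ∃ S ⊆ Q, S.card ≤ t + 1 ∧ ¬ IsFaceOf d S Q := by
    simpa [Neighborly] using hnot
  obtain ⟨ν₀, hν₀, hν₀0, hν₀S⟩ := exists_dep_of_not_isFaceOf hSQ hface
  have hU := fourUniform_depSpace hQ hG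
  set β : Finset {x // x ∈ Q} := Finset.univ.filter fun i => (i : Pt d) ∉ S with hβ
  obtain ⟨ν, hν, hνβ⟩ : ∃ ν ∈ depSpace Q, ∀ i ∈ β, 0 < ν i := by
    obtain ⟨ν, hν, δ, hδ, h1, h2⟩ := hU.perturb hν₀ hν₀0 1
    refine ⟨ν, hν, fun i hi => ?_⟩
    have hi0 := hν₀S i (Finset.mem_filter.1 hi).2
    by_cases h0 : ν₀ i = 0
    · rw [h1 i h0]; simpa using hδ
    · exact (mul_pos_iff_of_pos_left (lt_of_le_of_ne hi0 (Ne.symm h0))).1 (h2 i h0)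
  have hβc : βᶜ.card ≤ t + 1 := by
    refine le_trans ?_ hScard
    rw [← Finset.card_map (Function.Embedding.subtype _)]
    refine Finset.card_le_card fun x hx => ?_
    obtain ⟨i, hi, rfl⟩ := Finset.mem_map.1 hx
    simpa [hβ] using hi
  have hιcard : Fintype.card {x // x ∈ Q} = d + 5 := by simp [hQ]
  have hβcard : β.card + βᶜ.card = d + 5 := by rw [Finset.card_add_card_compl, hιcard]
  set N := (crossingPartitions d Q ((d + 3 - t + 1) / 2)).ncard with hN
  set 𝒮 : Finset (Finset {x // x ∈ Q}) := Finset.univ.filter fun B =>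
    s(B.map (Function.Embedding.subtype _), Bᶜ.map (Function.Embedding.subtype _)) ∈
      crossingPartitions d Q ((d + 3 - t + 1) / 2) with h𝒮
  have hcount := hU.card_balanced (by omega) β (by omega) hν hνβ 𝒮 (by
    intro l hl hl0 hbal
    refine Finset.mem_filter.2 ⟨Finset.mem_univ _, _, _, rfl, ?_, ?_, ?_, ?_, ?_⟩
    · ext x
      simp only [Finset.mem_union, Finset.mem_map, Function.Embedding.subtype_apply]
      constructor
      · rintro (⟨i, -, rfl⟩ | ⟨i, -, rfl⟩) <;> exact i.2
      · intro hx
        by_cases h : 0 < l ⟨x, hx⟩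
        · exact Or.inl ⟨⟨x, hx⟩, by simpa using h, rfl⟩
        · exact Or.inr ⟨⟨x, hx⟩, by simpa using h, rfl⟩
    · exact (Finset.disjoint_map _).2 disjoint_compl_right
    · have := abs_le.1 (two_mul_card_pos β l hl0 hbal)
      rw [Finset.card_map]
      omega
    · have := abs_le.1 (two_mul_card_pos β l hl0 hbal)
      rw [Finset.card_map, Finset.card_compl]
      omega
    · exact dep_crossing (Finset.card_pos.1 (by omega)) hl hl0)
  have h2 := card_le_two_mul_ncard Q ((d + 3 - t + 1) / 2) 𝒮
    (fun B hB => (Finset.mem_filter.1 hB).2)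
  rw [← hN] at h2
  have hm : d + 2 ≤ 2 * β.card := by omega
  have h3 : β.card * β.card ≤ 24 * N + β.card := by omega
  have h3' : (β.card : ℝ) * β.card ≤ 24 * N + β.card := by exact_mod_cast h3
  have hm' : (d : ℝ) + 2 ≤ 2 * β.card := by exact_mod_cast hm
  nlinarith [Nat.cast_nonneg (α := ℝ) d]
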